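/- Let (k : K → X, f : X → M) be a Schreier extension with K commutative. Then for all x ∈ X and a ∈ K, x + k(a) = k(f(x) ∗ a) + x. -/

import Mathlib

/-- A monoid extension: `K`, `X` additive monoids (not assumed commutative),
`M` a multiplicative monoid, `k : K → X` an injective monoid homomorphism whose image
is `{x | f x = 1}`, and `f : X → M` a surjective monoid homomorphism. -/
structure MonoidExtension {K X M : Type*} [AddMonoid K] [AddMonoid X] [Monoid M]
    (k : K → X) (f : X → M) : Prop where
  k_add : ∀ a b : K, k (a + b) = k a + k b
  k_zero : k 0 = 0
  k_inj : Function.Injective k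
  ker_eq : ∀ x : X, f x = 1 ↔ x ∈ Set.range k
  f_add : ∀ x y : X, f (x + y) = f x * f y
  f_zero : f 0 = 1
  f_surj : Function.Surjective f

/-- The set `B_m` of representatives of `m`. -/
def Reps {K X M : Type*} [AddMonoid K] [AddMonoid X] [Monoid M]
    (k : K → X) (f : X → M) (m : M) : Set X :=
  {u | f u = m ∧ ∀ x : X, f x = m → ∃! a : K, x = k a + u}

/-- A monoid extension is a Schreier extension if every `m` has a representative. -/
def IsSchreier {K X M : Type*} [AddMonoid K] [AddMonoid X] [Monoid M]
    (k : K → X) (f : X → M) : Prop :=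
  ∀ m : M, (Reps k f m).Nonempty

theorem addSemiconjBy_map_add_left {K X : Type*} [AddCommSemigroup K] [AddSemigroup X]
    (k : K →ₙ+ X) {u y : X} {c : K} (h : AddSemiconjBy u y (k c)) (b : K) :
    AddSemiconjBy (k b + u) y (k c) :=
  AddSemiconjBy.add_left ((AddCommute.all b c).map k) h

theorem patrick_lemma_general {K X M : Type*} [AddCommSemigroup K] [AddSemigroup X]
    (k : K →ₙ+ X) (f : X → M) (s : M → X) (hs : ∀ x : X, ∃ b : K, x = k b + s (f x))
    (star : M → K → K) (hstar : ∀ (m : M) (a : K), s m + k a = k (star m a) + s m) :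
    ∀ (x : X) (a : K), x + k a = k (star (f x) a) + x := by
  intro x a
  obtain ⟨b, hb⟩ := hs x
  have hx : AddSemiconjBy (k b + s (f x)) (k a) (k (star (f x) a)) :=
    addSemiconjBy_map_add_left k (hstar (f x) a) b
  rwa [← hb] at hx

/-- Lemma 3.3 (lemma:patrick): for a Schreier extension with `K` commutative,
`x + k a = k (f x ∗ a) + x` for all `x ∈ X` and `a ∈ K`. -/
theorem patrick_lemma {K X M : Type*} [AddCommMonoid K] [AddMonoid X] [Monoid M]
    (k : K → X) (f : X → M) (hE : MonoidExtension k f) (hS : IsSchreier k f)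
    (star : M → K → K)
    (hstar : ∀ (m : M) (a : K) (u : X), u ∈ Reps k f m → u + k a = k (star m a) + u) :
    ∀ (x : X) (a : K), x + k a = k (star (f x) a) + x := by
  choose s hs using hS
  exact patrick_lemma_general ⟨k, hE.k_add⟩ f s (fun x ↦ ((hs (f x)).2 x rfl).exists)
    star (fun m a ↦ hstar m a (s m) (hs m))
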